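/- Let (X, T) be a dynamical system. If the Zadeh extension system (𝔽₀(X), T_F) with the levelwise metric d_∞ is equicontinuous, then the induced hyperspace system (K(X), T_K) is equicontinuous. -/

import Mathlib

open Metric Set TopologicalSpace Filter Function
open scoped Classical

variable {X Y : Type*}

/-- Extended Hausdorff metric on subsets of `X`: the usual Hausdorff distance between
two nonempty sets (or two empty sets), and `diam X` when exactly one of them is empty. -/
noncomputable def eHd (X : Type*) [MetricSpace X] (A B : Set X) : ℝ :=
  if (A.Nonempty ∧ B.Nonempty) ∨ (A = ∅ ∧ B = ∅) then Metric.hausdorffDist A B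
  else Metric.diam (Set.univ : Set X)

/-- The `α`-cut of a fuzzy set. -/
def cut (A : X → ℝ) (α : ℝ) : Set X := {x | α ≤ A x}

/-- The levelwise metric `d_∞` on fuzzy sets. -/
noncomputable def dinf [MetricSpace X] (A B : X → ℝ) : ℝ :=
  sSup {r : ℝ | ∃ α ∈ Set.Ioc (0:ℝ) 1, r = eHd X (cut A α) (cut B α)}

/-- A fuzzy set: an upper semicontinuous function into `[0,1]`. -/
def IsFuzzy [TopologicalSpace X] (A : X → ℝ) : Prop :=
  (∀ x, A x ∈ Set.Icc (0:ℝ) 1) ∧ UpperSemicontinuous A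

/-- `𝔽₀(X)`: nonempty (not identically zero) u.s.c. fuzzy sets. -/
def F0 (X : Type*) [TopologicalSpace X] : Set (X → ℝ) :=
  {A | IsFuzzy A ∧ ∃ x, A x ≠ 0}

/-- `𝔽^{=λ}(X)`: u.s.c. fuzzy sets with maximum value `λ`. -/
def Feq (X : Type*) [TopologicalSpace X] (lam : ℝ) : Set (X → ℝ) :=
  {A | IsFuzzy A ∧ (∃ x, A x = lam) ∧ ∀ x, A x ≤ lam}

/-- `𝔽^{≥λ}(X)`: u.s.c. fuzzy sets attaining a value `≥ λ`. -/
def Fge (X : Type*) [TopologicalSpace X] (lam : ℝ) : Set (X → ℝ) :=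
  {A | IsFuzzy A ∧ ∃ x, lam ≤ A x}

/-- Zadeh's extension of `T`. -/
noncomputable def zadeh (T : X → X) (A : X → ℝ) : X → ℝ :=
  fun x => sSup (A '' (T ⁻¹' {x}))

/-- The induced map `T_K` on the hyperspace of nonempty closed (= compact) subsets. -/
def hyper [TopologicalSpace X] (T : X → X) (hT : Continuous T)
    (A : NonemptyCompacts X) : NonemptyCompacts X :=
  ⟨⟨T '' A, A.isCompact.image hT⟩, A.nonempty.image T⟩

/-- Topological transitivity. -/
def TopTrans [TopologicalSpace Y] (S : Y → Y) : Prop :=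
  ∀ U V : Set Y, IsOpen U → IsOpen V → U.Nonempty → V.Nonempty →
    ∃ n : ℕ, (S^[n] '' U ∩ V).Nonempty

/-- Weak mixing: `S × S` is transitive. -/
def TopWeakMix [TopologicalSpace Y] (S : Y → Y) : Prop :=
  TopTrans (fun p : Y × Y => (S p.1, S p.2))

/-- Topological transitivity of `S` restricted to `C`, for the topology induced by the
(pseudo)metric `ρ`, phrased via metric balls. -/
def TransOn (ρ : Y → Y → ℝ) (S : Y → Y) (C : Set Y) : Prop :=
  ∀ A ∈ C, ∀ B ∈ C, ∀ ε > 0, ∃ n : ℕ, ∃ E ∈ C, ρ E A < ε ∧ ρ (S^[n] E) B < ε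

/-- Weak mixing of `S` restricted to `C`, phrased via metric balls. -/
def WeakMixOn (ρ : Y → Y → ℝ) (S : Y → Y) (C : Set Y) : Prop :=
  ∀ A₁ ∈ C, ∀ A₂ ∈ C, ∀ B₁ ∈ C, ∀ B₂ ∈ C, ∀ ε > 0, ∃ n : ℕ,
    ∃ E₁ ∈ C, ∃ E₂ ∈ C, ρ E₁ A₁ < ε ∧ ρ E₂ A₂ < ε ∧
      ρ (S^[n] E₁) B₁ < ε ∧ ρ (S^[n] E₂) B₂ < ε


/-- Equicontinuity of (the iterates of) a self-map of a metric space. -/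
def EquicontM {Z : Type*} [PseudoMetricSpace Z] (S : Z → Z) : Prop :=
  ∀ ε > 0, ∃ δ > 0, ∀ y z : Z, dist y z < δ → ∀ n : ℕ, dist (S^[n] y) (S^[n] z) < ε

/-- Equicontinuity of `S` restricted to `C`, with respect to the metric `ρ`. -/
def EquicontOn (ρ : Y → Y → ℝ) (S : Y → Y) (C : Set Y) : Prop :=
  ∀ ε > 0, ∃ δ > 0, ∀ A ∈ C, ∀ B ∈ C, ρ A B < δ → ∀ n : ℕ, ρ (S^[n] A) (S^[n] B) < ε

/-!
The map `K ↦ lam • 1_K` embeds `K(X)` isometrically into `𝔽^{=lam}(X) ⊆ 𝔽₀(X)`, because every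
`α`-cut of `lam • 1_K` is `K` when `α ≤ lam` and empty otherwise. It intertwines `T_K` and `T_F`,
so equicontinuity pulls back along it.
-/

theorem EquicontOn.mono {ρ : Y → Y → ℝ} {S : Y → Y} {C D : Set Y} (hD : EquicontOn ρ S D)
    (hCD : C ⊆ D) : EquicontOn ρ S C := by
  intro ε hε
  obtain ⟨δ, hδ, hS⟩ := hD ε hε
  exact ⟨δ, hδ, fun A hA B hB => hS A (hCD hA) B (hCD hB)⟩

theorem EquicontOn.equicontM_of_semiconj {Z : Type*} [PseudoMetricSpace Z] {ρ : Y → Y → ℝ}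
    {S : Y → Y} {C : Set Y} (hS : EquicontOn ρ S C) {R : Z → Z} {φ : Z → Y}
    (hφC : ∀ z, φ z ∈ C) (hφ : Semiconj φ R S) (hdist : ∀ y z, ρ (φ y) (φ z) = dist y z) :
    EquicontM R := by
  intro ε hε
  obtain ⟨δ, hδ, hSδ⟩ := hS ε hε
  refine ⟨δ, hδ, fun y z hyz n => ?_⟩
  calc dist (R^[n] y) (R^[n] z)
      = ρ (S^[n] (φ y)) (S^[n] (φ z)) := by
        rw [← hdist, hφ.iterate_right n y, hφ.iterate_right n z]
    _ < ε := hSδ _ (hφC y) _ (hφC z) (by rwa [hdist]) n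

theorem cut_indicator_const_of_le (A : Set X) {lam α : ℝ} (hα : 0 < α) (hαl : α ≤ lam) :
    cut (A.indicator fun _ => lam) α = A := by
  ext x
  by_cases hx : x ∈ A <;> simp [cut, hx, hα, hαl]

theorem cut_indicator_const_of_lt (A : Set X) {lam α : ℝ} (hα : 0 < α) (hlα : lam < α) :
    cut (A.indicator fun _ => lam) α = ∅ := by
  ext x
  by_cases hx : x ∈ A <;> simp [cut, hx, hα, hlα]

theorem eHd_of_nonempty [MetricSpace X] {A B : Set X} (hA : A.Nonempty) (hB : B.Nonempty) :
    eHd X A B = hausdorffDist A B :=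
  if_pos (Or.inl ⟨hA, hB⟩)

theorem eHd_self [MetricSpace X] (A : Set X) : eHd X A A = 0 := by
  rw [eHd, if_pos (by simpa using A.eq_empty_or_nonempty.symm), hausdorffDist_self_zero]

theorem dinf_indicator_const [MetricSpace X] {A B : Set X} (hA : A.Nonempty) (hB : B.Nonempty)
    {lam : ℝ} (hlam : lam ∈ Ioc (0 : ℝ) 1) :
    dinf (A.indicator fun _ => lam) (B.indicator fun _ => lam) = hausdorffDist A B := by
  have eHd_cut_of_le {α : ℝ} (hα : 0 < α) (hαl : α ≤ lam) :
      eHd X (cut (A.indicator fun _ => lam) α) (cut (B.indicator fun _ => lam) α) =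
        hausdorffDist A B := by
    rw [cut_indicator_const_of_le A hα hαl, cut_indicator_const_of_le B hα hαl,
      eHd_of_nonempty hA hB]
  refine IsGreatest.csSup_eq ⟨⟨lam, hlam, (eHd_cut_of_le hlam.1 le_rfl).symm⟩, ?_⟩
  rintro _ ⟨α, hα, rfl⟩
  rcases le_or_gt α lam with hαl | hlα
  · exact (eHd_cut_of_le hα.1 hαl).le
  · rw [cut_indicator_const_of_lt A hα.1 hlα, cut_indicator_const_of_lt B hα.1 hlα, eHd_self]
    exact hausdorffDist_nonneg

theorem zadeh_indicator_const {T : X → X} (hT : Surjective T) (A : Set X) {lam : ℝ}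
    (hlam : 0 ≤ lam) :
    zadeh T (A.indicator fun _ => lam) = (T '' A).indicator fun _ => lam := by
  funext x
  by_cases hx : x ∈ T '' A
  · obtain ⟨y, hy, rfl⟩ := hx
    rw [indicator_of_mem (mem_image_of_mem T hy)]
    refine IsGreatest.csSup_eq ⟨⟨y, rfl, indicator_of_mem hy _⟩, ?_⟩
    rintro _ ⟨z, -, rfl⟩
    exact indicator_apply_le' (fun _ => le_rfl) fun _ => hlam
  · have eq_zero_on_fiber : ∀ y ∈ T ⁻¹' {x}, A.indicator (fun _ => lam) y = 0 := fun y hy =>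
      indicator_of_notMem (fun hyA => hx ⟨y, hyA, hy⟩) _
    rw [indicator_of_notMem hx, zadeh, image_congr eq_zero_on_fiber,
      (hT.nonempty_preimage.2 (singleton_nonempty x)).image_const, csSup_singleton]

theorem semiconj_indicator_const_hyper_zadeh [TopologicalSpace X] {T : X → X} (hT : Continuous T)
    (hTs : Surjective T) {lam : ℝ} (hlam : 0 ≤ lam) :
    Semiconj (fun K : NonemptyCompacts X => (K : Set X).indicator fun _ => lam)
      (hyper T hT) (zadeh T) :=
  fun K => (zadeh_indicator_const hTs (K : Set X) hlam).symm

theorem indicator_const_mem_Feq [TopologicalSpace X] {A : Set X} (hA : IsClosed A)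
    (hne : A.Nonempty) {lam : ℝ} (hlam : lam ∈ Icc (0 : ℝ) 1) :
    (A.indicator fun _ => lam) ∈ Feq X lam := by
  have le_lam (x : X) : A.indicator (fun _ => lam) x ≤ lam :=
    indicator_apply_le' (fun _ => le_rfl) fun _ => hlam.1
  obtain ⟨a, ha⟩ := hne
  exact ⟨⟨fun x => ⟨indicator_apply_nonneg fun _ => hlam.1, (le_lam x).trans hlam.2⟩,
    hA.upperSemicontinuous_indicator hlam.1⟩, ⟨a, indicator_of_mem ha _⟩, le_lam⟩

theorem Feq_subset_F0 [TopologicalSpace X] {lam : ℝ} (hlam : lam ≠ 0) : Feq X lam ⊆ F0 X :=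
  fun _ ⟨hA, ⟨x, hx⟩, _⟩ => ⟨hA, x, hx ▸ hlam⟩

theorem hyper_equicontinuous_of_zadeh_equicontinuous_general [MetricSpace X] {T : X → X}
    (hT : Continuous T) (hTs : Surjective T) {lam : ℝ} (hlam : lam ∈ Ioc (0 : ℝ) 1)
    (heq : EquicontOn dinf (zadeh T) (Feq X lam)) : EquicontM (hyper T hT) :=
  heq.equicontM_of_semiconj
    (fun K => indicator_const_mem_Feq K.isCompact.isClosed K.nonempty (Ioc_subset_Icc_self hlam))
    (semiconj_indicator_const_hyper_zadeh hT hTs hlam.1.le)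
    (fun K L => dinf_indicator_const K.nonempty L.nonempty hlam)

/-- If the Zadeh extension on `𝔽₀(X)` is equicontinuous, then `(K(X), T_K)` is
equicontinuous. -/
theorem hyper_equicontinuous_of_zadeh_equicontinuous {X : Type*} [MetricSpace X] [CompactSpace X] [Nontrivial X]
    (T : X → X) (hT : Continuous T) (hTs : Function.Surjective T)
    (heq : EquicontOn dinf (zadeh T) (F0 X)) :
    EquicontM (hyper T hT) :=
  hyper_equicontinuous_of_zadeh_equicontinuous_general hT hTs (right_mem_Ioc.2 one_pos)
    (heq.mono (Feq_subset_F0 one_ne_zero))
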